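/- Let T > 0, let f, g ∈ C^∞([0,T]×𝕋³), let ℓ ∈ (0,1), and write f_ℓ = P_{≤ℓ^{−1}} f, g_ℓ = P_{≤ℓ^{−1}} g and (fg)_ℓ = P_{≤ℓ^{−1}}(fg) (cutoffs in the space variable). Then for every integer N ≥ 0 there is a constant C(N), depending only on N and the fixed cutoff function φ, such that ‖f_ℓ g_ℓ − (fg)_ℓ‖_N ≤ C(N) ℓ^{2−N} ‖f‖₁ ‖g‖₁. -/

import Mathlib

open MeasureTheory

noncomputable section

/-- Points of `ℝ³`. -/
abbrev V3 : Type := Fin 3 → ℝ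

/-- The fundamental domain `[-π, π]³` of the torus `𝕋³`. -/
def T3 : Set V3 := Set.Icc (fun _ => -Real.pi) (fun _ => Real.pi)

/-- A function on `ℝ³` is (`2π`-)periodic, i.e. descends to the torus `𝕋³`. -/
def PerSpace {α : Type*} (f : V3 → α) : Prop :=
  ∀ (x : V3) (v : Fin 3 → ℤ), f (fun i => x i + 2 * Real.pi * v i) = f x

/-- A time-dependent function on `ℝ³` is (`2π`-)periodic in space. -/
def PerSpaceT {α : Type*} (f : ℝ × V3 → α) : Prop :=
  ∀ (t : ℝ) (x : V3) (v : Fin 3 → ℤ), f (t, fun i => x i + 2 * Real.pi * v i) = f (t, x)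

/-- The Euclidean norm on `ℝ³` (the cutoff `φ` is radial with respect to it). -/
def enorm3 (x : V3) : ℝ := Real.sqrt (∑ i, x i ^ 2)

/-- `Jof S` is the largest integer `J` with `2^J ≤ S`. -/
def Jof (S : ℝ) : ℤ := ⌊Real.logb 2 S⌋

/-- The `k`-th Fourier coefficient of a (`2π`-)periodic function on `ℝ³`. -/
def fcoef (g : V3 → ℝ) (k : Fin 3 → ℤ) : ℂ :=
  (((2 * Real.pi) ^ (3 : ℕ))⁻¹ : ℝ) •
    ∫ x in T3, (g x : ℂ) * Complex.exp (-(Complex.I * ((∑ i, (k i : ℝ) * x i : ℝ) : ℂ)))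

/-- The low-frequency cutoff `P_{≤S}` associated with the cutoff function `φ`: on a
périodic function `g` it multiplies the `k`-th Fourier coefficient by `φ(k / 2^J)`,
where `J = Jof S` is the largest integer with `2^J ≤ S`.  (For a Schwartz-class cutoff
this agrees with convolution against the rescaled inverse Fourier transform
`2^{3J} φ̌(2^J ·)` of `φ`.) -/
def Pse (φ : V3 → ℝ) (S : ℝ) (g : V3 → ℝ) (x : V3) : ℝ :=
  (∑' k : Fin 3 → ℤ,
      ((φ (fun i => (k i : ℝ) / (2 : ℝ) ^ Jof S) : ℝ) : ℂ) * fcoef g k *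
        Complex.exp (Complex.I * ((∑ i, (k i : ℝ) * x i : ℝ) : ℂ))).re

/-- `P_{≤S}` applied in the space variable to a time-dependent function. -/
def PseT (φ : V3 → ℝ) (S : ℝ) (f : ℝ × V3 → ℝ) (tx : ℝ × V3) : ℝ :=
  Pse φ S (fun y => f (tx.1, y)) tx.2

/-- The hypotheses on the fixed cutoff function `φ`: smooth, radial, `≡ 1` on the closed
unit ball and supported in `B(0,2)`. -/
def IsCutoff (φ : V3 → ℝ) : Prop :=
  ContDiff ℝ (⊤ : ℕ∞) φ ∧ (∀ x y : V3, enorm3 x = enorm3 y → φ x = φ y) ∧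
    (∀ x : V3, enorm3 x ≤ 1 → φ x = 1) ∧ (∀ x : V3, 2 ≤ enorm3 x → φ x = 0)

/-!
On a `2π`-periodic function the multiplier `P_{≤S}` is convolution with a kernel of integral one,
the inverse Fourier transform of `φ` contracted to length scale `1 / S`; both are continuous in the
function, so it is enough to compare them on plane waves. Thus `f_ℓ g_ℓ - (fg)_ℓ` at a point is
minus the covariance of the translates of `f` and `g` under this kernel, which does not change when
constants are subtracted from `f` and `g`. Subtracting the values at the point leaves a product of
two increments, each of size `O(ℓ)` times a Lipschitz constant, hence the gain `ℓ²`. Moreover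
`f_ℓ g_ℓ - (fg)_ℓ` has frequencies of size `O(ℓ⁻¹)` only, and Bernstein's inequality makes each
derivative of such a function cost a factor `O(ℓ⁻¹)`.
-/

open BoundedContinuousFunction Real
open scoped FourierTransform InnerProductSpace LineDeriv NNReal Pointwise SchwartzMap

section Calculus

variable {E F G : Type*} [NormedAddCommGroup E] [NormedSpace ℝ E] [NormedAddCommGroup F]
  [NormedSpace ℝ F] [NormedAddCommGroup G] [NormedSpace ℝ G]

lemma norm_iteratedFDeriv_comp_right_le (L : E →L[ℝ] F) {f : F → G} {n : ℕ} (hf : ContDiff ℝ n f)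
    (x : E) :
    ‖iteratedFDeriv ℝ n (f ∘ L) x‖ ≤ ‖L‖ ^ n * ‖iteratedFDeriv ℝ n f (L x)‖ := by
  rw [L.iteratedFDeriv_comp_right hf x le_rfl]
  refine (ContinuousMultilinearMap.norm_compContinuousLinearMap_le _ _).trans_eq ?_
  simp [mul_comm]

lemma lipschitzWith_slice_of_norm_iteratedFDeriv_one_le {f : E × F → G} (hf : Differentiable ℝ f)
    {K : ℝ≥0} {t : E} (hK : ∀ x, ‖iteratedFDeriv ℝ 1 (fun y => f (t, y)) x‖ ≤ K) :
    LipschitzWith K fun y => f (t, y) :=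
  lipschitzWith_of_nnnorm_fderiv_le (hf.comp (by fun_prop)) fun x =>
    (norm_iteratedFDeriv_one _).symm.trans_le (hK x)

end Calculus

/-! ### Band-limited functions and Bernstein's inequality -/

section BandLimited

variable {V : Type*} [NormedAddCommGroup V] [InnerProductSpace ℝ V]

lemma innerProbChar_add (k l : V) :
    innerProbChar (k + l) = innerProbChar k * innerProbChar l :=
  char_add_eq_mul k l

lemma innerProbChar_neg (k : V) : innerProbChar (-k) = star (innerProbChar k) :=
  char_neg k

lemma hasFDerivAt_innerProbChar (k x : V) :
    HasFDerivAt (innerProbChar k)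
      ((Complex.I * innerProbChar k x) • Complex.ofRealCLM ∘L innerSL ℝ k) x := by
  have h := ((Complex.ofRealCLM.hasFDerivAt.comp x (innerSL ℝ k).hasFDerivAt).mul_const
    Complex.I).cexp
  refine (h.congr_of_eventuallyEq (.of_forall fun y => ?_)).congr_fderiv ?_
  · simp [innerProbChar_apply, real_inner_comm]
  · ext v
    simp only [coe_innerSL_apply, Function.comp_apply, Complex.ofRealCLM_apply,
      _root_.smul_apply, ContinuousLinearMap.comp_apply, smul_eq_mul, innerProbChar_apply,
      real_inner_comm]
    ring

lemma contDiff_innerProbChar (k : V) {n : WithTop ℕ∞} : ContDiff ℝ n (innerProbChar k) :=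
  ((Complex.ofRealCLM.contDiff.comp (contDiff_id.inner ℝ contDiff_const)).mul
    contDiff_const).cexp

/-- The trigonometric polynomials on `V` whose frequencies have norm at most `R`. The frequencies
are arbitrary vectors, so no periodicity is built in. -/
def bandLimited (V : Type*) [NormedAddCommGroup V] [InnerProductSpace ℝ V] (R : ℝ) :
    Submodule ℂ (V →ᵇ ℂ) :=
  Submodule.span ℂ (innerProbChar '' Metric.closedBall (0 : V) R)

variable {R R' : ℝ} {h h' : V →ᵇ ℂ}

lemma innerProbChar_mem_bandLimited {k : V} (hk : ‖k‖ ≤ R) : innerProbChar k ∈ bandLimited V R :=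
  Submodule.subset_span ⟨k, by simpa using hk, rfl⟩

lemma mul_mem_bandLimited (hh : h ∈ bandLimited V R) (hh' : h' ∈ bandLimited V R') :
    h * h' ∈ bandLimited V (R + R') := by
  have hmul : bandLimited V R * bandLimited V R' ≤ bandLimited V (R + R') := by
    rw [bandLimited, bandLimited, Submodule.span_mul_span, Submodule.span_le]
    rintro _ ⟨_, ⟨k, hk, rfl⟩, _, ⟨l, hl, rfl⟩, rfl⟩
    simp only [mem_closedBall_zero_iff] at hk hl
    simpa only [SetLike.mem_coe, ← innerProbChar_add] using
      innerProbChar_mem_bandLimited ((norm_add_le k l).trans (add_le_add hk hl))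
  exact hmul (Submodule.mul_mem_mul hh hh')

lemma star_mem_bandLimited (hh : h ∈ bandLimited V R) : star h ∈ bandLimited V R := by
  induction hh using Submodule.span_induction with
  | mem h hh =>
    obtain ⟨k, hk, rfl⟩ := hh
    rw [← innerProbChar_neg]
    exact innerProbChar_mem_bandLimited (by simpa using hk)
  | zero => simp
  | add f g _ _ hf hg => simpa using add_mem hf hg
  | smul c f _ hf => simpa using Submodule.smul_mem _ _ hf

lemma exists_mem_bandLimited_eq_re (hh : h ∈ bandLimited V R) :
    ∃ h' ∈ bandLimited V R, ∀ x, h' x = ((h x).re : ℂ) := by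
  refine ⟨(2⁻¹ : ℂ) • (h + star h),
    Submodule.smul_mem _ _ (add_mem hh (star_mem_bandLimited hh)), fun x => ?_⟩
  rw [Complex.re_eq_add_conj, div_eq_inv_mul]
  rfl

lemma bandLimited_mono (hR : R ≤ R') : bandLimited V R ≤ bandLimited V R' :=
  Submodule.span_mono (Set.image_mono (Metric.closedBall_subset_closedBall hR))

lemma contDiff_of_mem_bandLimited (hh : h ∈ bandLimited V R) {n : WithTop ℕ∞} :
    ContDiff ℝ n h := by
  induction hh using Submodule.span_induction with
  | mem h hh => obtain ⟨k, -, rfl⟩ := hh; exact contDiff_innerProbChar k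
  | zero => exact contDiff_const
  | add f g _ _ hf hg => exact hf.add hg
  | smul c f _ hf => exact hf.const_smul c

lemma differentiable_of_mem_bandLimited (hh : h ∈ bandLimited V R) : Differentiable ℝ h :=
  (contDiff_of_mem_bandLimited hh (n := 1)).differentiable one_ne_zero

lemma fderiv_apply_eq_of_forall_innerProbChar {Φ : (V →ᵇ ℂ) →L[ℂ] ℂ} {x v : V}
    (hΦ : ∀ k : V, ‖k‖ ≤ R → Φ (innerProbChar k) = Complex.I * ⟪k, v⟫_ℝ * innerProbChar k x)
    (hh : h ∈ bandLimited V R) : fderiv ℝ h x v = Φ h := by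
  induction hh using Submodule.span_induction with
  | mem h hh =>
    obtain ⟨k, hk, rfl⟩ := hh
    rw [(hasFDerivAt_innerProbChar k x).fderiv, hΦ k (by simpa using hk)]
    simp only [_root_.smul_apply, ContinuousLinearMap.comp_apply, coe_innerSL_apply,
      Complex.ofRealCLM_apply, smul_eq_mul]
    ring
  | zero => simp
  | add f g hf hg hf' hg' =>
    rw [map_add, ← hf', ← hg', coe_add, fderiv_add (differentiable_of_mem_bandLimited hf x)
      (differentiable_of_mem_bandLimited hg x), _root_.add_apply]
  | smul c f hf hf' =>
    rw [map_smul, ← hf', coe_smul, fderiv_fun_const_smul (differentiable_of_mem_bandLimited hf x),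
      _root_.smul_apply]

lemma exists_mem_bandLimited_eq_fderiv (hh : h ∈ bandLimited V R) (v : V) :
    ∃ h' ∈ bandLimited V R, ∀ x, h' x = fderiv ℝ h x v := by
  induction hh using Submodule.span_induction with
  | mem h hh =>
    obtain ⟨k, hk, rfl⟩ := hh
    refine ⟨(Complex.I * ⟪k, v⟫_ℝ) • innerProbChar k,
      Submodule.smul_mem _ _ (innerProbChar_mem_bandLimited (by simpa using hk)), fun x => ?_⟩
    rw [(hasFDerivAt_innerProbChar k x).fderiv]
    simp only [coe_smul, smul_eq_mul, _root_.smul_apply, ContinuousLinearMap.comp_apply,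
      coe_innerSL_apply, Complex.ofRealCLM_apply]
    ring
  | zero => exact ⟨0, zero_mem _, by simp⟩
  | add f g hf hg hf' hg' =>
    obtain ⟨f', hf'mem, hf'⟩ := hf'
    obtain ⟨g', hg'mem, hg'⟩ := hg'
    refine ⟨f' + g', add_mem hf'mem hg'mem, fun x => ?_⟩
    rw [coe_add, coe_add, fderiv_add (differentiable_of_mem_bandLimited hf x)
      (differentiable_of_mem_bandLimited hg x), Pi.add_apply, hf', hg', _root_.add_apply]
  | smul c f hf hf' =>
    obtain ⟨f', hf'mem, hf'⟩ := hf'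
    refine ⟨c • f', Submodule.smul_mem _ c hf'mem, fun x => ?_⟩
    rw [BoundedContinuousFunction.smul_apply, coe_smul,
      fderiv_fun_const_smul (differentiable_of_mem_bandLimited hf x), _root_.smul_apply, hf']

end BandLimited

section RescaledConvolution

variable {V : Type*} [NormedAddCommGroup V] [InnerProductSpace ℝ V] [FiniteDimensional ℝ V]
  [MeasurableSpace V] [BorelSpace V]

lemma integrable_rescaled_mul (ψ : 𝓢(V, ℂ)) (Λ : ℝ) (x : V) (h : V →ᵇ ℂ) :
    Integrable fun y => h (x - (2 * π / Λ) • y) * ψ y :=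
  ψ.integrable.bdd_mul (c := ‖h‖) (by fun_prop) (.of_forall fun _ => h.norm_coe_le_norm _)

/-- The value at `x` of the convolution of a bounded function with the kernel `ψ` contracted to
length scale `2π / Λ`. In the convention of `𝓕` this is the Fourier multiplier
`ξ ↦ 𝓕 ψ (ξ / Λ)` acting on the plane waves `x ↦ exp (i⟪x, ξ⟫)`. -/
def rescaledConvAt (ψ : 𝓢(V, ℂ)) (Λ : ℝ) (x : V) : (V →ᵇ ℂ) →L[ℂ] ℂ :=
  LinearMap.mkContinuous
    { toFun h := ∫ y, h (x - (2 * π / Λ) • y) * ψ y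
      map_add' f g := by
        simp only [coe_add, Pi.add_apply, add_mul]
        exact integral_add (integrable_rescaled_mul ψ Λ x f) (integrable_rescaled_mul ψ Λ x g)
      map_smul' c f := by
        simp only [coe_smul, smul_eq_mul, mul_assoc, integral_const_mul, RingHom.id_apply] }
    (∫ y, ‖ψ y‖) fun h => by
      rw [← integral_mul_const]
      refine norm_integral_le_of_norm_le (ψ.integrable.norm.mul_const _) (.of_forall fun y => ?_)
      rw [norm_mul, mul_comm]
      gcongr
      exact h.norm_coe_le_norm _

lemma rescaledConvAt_apply (ψ : 𝓢(V, ℂ)) (Λ : ℝ) (x : V) (h : V →ᵇ ℂ) :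
    rescaledConvAt ψ Λ x h = ∫ y, h (x - (2 * π / Λ) • y) * ψ y :=
  rfl

lemma norm_rescaledConvAt_le (ψ : 𝓢(V, ℂ)) (Λ : ℝ) (x : V) :
    ‖rescaledConvAt ψ Λ x‖ ≤ ∫ y, ‖ψ y‖ :=
  LinearMap.mkContinuous_norm_le _ (integral_nonneg fun _ => norm_nonneg _) _

lemma rescaledConvAt_innerProbChar (ψ : 𝓢(V, ℂ)) (Λ : ℝ) (x k : V) :
    rescaledConvAt ψ Λ x (innerProbChar k) = 𝓕 ψ (Λ⁻¹ • k) * innerProbChar k x := by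
  rw [rescaledConvAt_apply, SchwartzMap.fourier_coe, Real.fourier_eq', ← integral_mul_const]
  refine integral_congr_ae (.of_forall fun y => ?_)
  simp only [innerProbChar_apply, smul_eq_mul]
  rw [mul_right_comm, ← Complex.exp_add, inner_sub_left, real_inner_smul_left,
    real_inner_smul_right]
  congr 2
  push_cast
  ring

/-- The kernel does not change frequencies up to `Λ`, so the derivative can be moved onto it. -/
lemma fderiv_eq_rescaledConvAt {ψ : 𝓢(V, ℂ)} (hψ : ∀ ξ : V, ‖ξ‖ ≤ 1 → 𝓕 ψ ξ = 1) {Λ : ℝ}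
    (hΛ : 0 < Λ) {h : V →ᵇ ℂ} (hh : h ∈ bandLimited V Λ) (x v : V) :
    fderiv ℝ h x v = ((Λ / (2 * π) : ℝ) : ℂ) * rescaledConvAt (∂_{v} ψ) Λ x h := by
  refine fderiv_apply_eq_of_forall_innerProbChar
    (Φ := ((Λ / (2 * π) : ℝ) : ℂ) • rescaledConvAt (∂_{v} ψ) Λ x) (fun k hk => ?_) hh
  have hk' : ‖Λ⁻¹ • k‖ ≤ 1 := by
    rwa [norm_smul, norm_inv, norm_of_nonneg hΛ.le, inv_mul_le_iff₀ hΛ, mul_one]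
  have hinner : (fun ξ => ⟪ξ, v⟫_ℝ).HasTemperateGrowth := by fun_prop
  have hΛ' : (Λ : ℂ) ≠ 0 := mod_cast hΛ.ne'
  have hπ : (π : ℂ) ≠ 0 := mod_cast pi_ne_zero
  rw [_root_.smul_apply, rescaledConvAt_innerProbChar,
    SchwartzMap.fourier_lineDerivOp_eq, _root_.smul_apply,
    SchwartzMap.smulLeftCLM_apply_apply hinner, hψ _ hk', real_inner_smul_left]
  simp only [smul_eq_mul, Complex.real_smul]
  push_cast
  field_simp

lemma exists_schwartzMap_fourier_eq {χ : V → ℝ} (hχ : ContDiff ℝ (⊤ : ℕ∞) χ)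
    (hsupp : HasCompactSupport χ) : ∃ ψ : 𝓢(V, ℂ), ∀ ξ, 𝓕 ψ ξ = χ ξ := by
  have hsupp' : HasCompactSupport fun ξ => (χ ξ : ℂ) :=
    hsupp.comp_left (g := ((↑) : ℝ → ℂ)) Complex.ofReal_zero
  refine ⟨𝓕⁻ (hsupp'.toSchwartzMap (Complex.ofRealCLM.contDiff.comp hχ)), fun ξ => ?_⟩
  rw [FourierTransform.fourier_fourierInv_eq]
  rfl

variable (V) in
lemma exists_schwartzMap_fourier_eq_one :
    ∃ ψ : 𝓢(V, ℂ), ∀ ξ : V, ‖ξ‖ ≤ 1 → 𝓕 ψ ξ = 1 := by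
  let b : ContDiffBump (0 : V) := ⟨1, 2, one_pos, one_lt_two⟩
  obtain ⟨ψ, hψ⟩ := exists_schwartzMap_fourier_eq b.contDiff b.hasCompactSupport
  refine ⟨ψ, fun ξ hξ => ?_⟩
  rw [hψ, b.one_of_mem_closedBall (by simpa using hξ), Complex.ofReal_one]

end RescaledConvolution

section Bernstein

variable (V : Type*) [NormedAddCommGroup V] [InnerProductSpace ℝ V] [FiniteDimensional ℝ V]

lemma exists_norm_fderiv_le_of_mem_bandLimited :
    ∃ K : ℝ, 0 ≤ K ∧ ∀ Λ : ℝ, 0 < Λ → ∀ h ∈ bandLimited V Λ, ∀ x : V,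
      ‖fderiv ℝ h x‖ ≤ K * Λ * ‖h‖ := by
  borelize V
  obtain ⟨ψ, hψ⟩ := exists_schwartzMap_fourier_eq_one V
  have hint : Integrable fun y => ‖fderiv ℝ ψ y‖ := (SchwartzMap.fderivCLM ℝ V ℂ ψ).integrable.norm
  refine ⟨(2 * π)⁻¹ * ∫ y, ‖fderiv ℝ ψ y‖, by positivity, fun Λ hΛ h hh x => ?_⟩
  refine ContinuousLinearMap.opNorm_le_bound _ (by positivity) fun v => ?_
  have hv : ∫ y, ‖∂_{v} ψ y‖ ≤ (∫ y, ‖fderiv ℝ ψ y‖) * ‖v‖ := by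
    rw [← integral_mul_const]
    exact integral_mono (∂_{v} ψ).integrable.norm (hint.mul_const _)
      fun y => (fderiv ℝ ψ y).le_opNorm v
  rw [fderiv_eq_rescaledConvAt hψ hΛ hh, norm_mul, Complex.norm_real,
    norm_of_nonneg (by positivity)]
  calc Λ / (2 * π) * ‖rescaledConvAt (∂_{v} ψ) Λ x h‖
    _ ≤ Λ / (2 * π) * ((∫ y, ‖fderiv ℝ ψ y‖) * ‖v‖ * ‖h‖) := by
      gcongr
      exact (ContinuousLinearMap.le_of_opNorm_le _
        ((norm_rescaledConvAt_le (∂_{v} ψ) Λ x).trans hv) h)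
    _ = (2 * π)⁻¹ * (∫ y, ‖fderiv ℝ ψ y‖) * Λ * ‖h‖ * ‖v‖ := by ring

theorem exists_norm_iteratedFDeriv_le_of_mem_bandLimited :
    ∃ K : ℝ, 0 ≤ K ∧ ∀ Λ : ℝ, 0 < Λ → ∀ h ∈ bandLimited V Λ, ∀ (n : ℕ) (x : V),
      ‖iteratedFDeriv ℝ n h x‖ ≤ (K * Λ) ^ n * ‖h‖ := by
  obtain ⟨K, hK, hfderiv⟩ := exists_norm_fderiv_le_of_mem_bandLimited V
  refine ⟨K, hK, fun Λ hΛ h hh n x => ?_⟩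
  refine ContinuousMultilinearMap.opNorm_le_bound (by positivity) fun w => ?_
  induction n generalizing h with
  | zero => simpa using h.norm_coe_le_norm x
  | succ n ih =>
    have hsmooth : ContDiff ℝ n (fderiv ℝ h) :=
      (contDiff_of_mem_bandLimited hh (n := n + 1)).fderiv_right le_rfl
    obtain ⟨h', hh', hderiv⟩ := exists_mem_bandLimited_eq_fderiv hh (w (Fin.last n))
    have hnorm : ‖h'‖ ≤ K * Λ * ‖h‖ * ‖w (Fin.last n)‖ :=
      (norm_le (by positivity)).2 fun y => by
        rw [hderiv]
        exact ContinuousLinearMap.le_of_opNorm_le _ (hfderiv Λ hΛ h hh y) _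
    calc ‖iteratedFDeriv ℝ (n + 1) h x w‖
      _ = ‖iteratedFDeriv ℝ n h' x (Fin.init w)‖ := by
        rw [iteratedFDeriv_succ_apply_right, funext hderiv,
          iteratedFDeriv_clm_apply_const_apply hsmooth le_rfl]
      _ ≤ (K * Λ) ^ n * ‖h'‖ * ∏ i, ‖Fin.init w i‖ := ih h' hh' _
      _ ≤ (K * Λ) ^ n * (K * Λ * ‖h‖ * ‖w (Fin.last n)‖) * ∏ i, ‖Fin.init w i‖ := by gcongr
      _ = (K * Λ) ^ (n + 1) * ‖h‖ * ∏ i, ‖w i‖ := by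
        rw [Fin.prod_univ_castSucc]
        simp only [Fin.init]
        ring

lemma exists_norm_iteratedFDeriv_le_of_ofReal_mem_bandLimited :
    ∃ K : ℝ, 0 ≤ K ∧ ∀ Λ : ℝ, 0 < Λ → ∀ h ∈ bandLimited V Λ, ∀ f : V → ℝ, (∀ x, h x = f x) →
      ContDiff ℝ (⊤ : ℕ∞) f ∧ ∀ M : ℝ, (∀ x, |f x| ≤ M) → ∀ (n : ℕ) (x : V),
        ‖iteratedFDeriv ℝ n f x‖ ≤ (K * Λ) ^ n * M := by
  obtain ⟨K, hK, hbernstein⟩ := exists_norm_iteratedFDeriv_le_of_mem_bandLimited V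
  refine ⟨K, hK, fun Λ hΛ h hh f hf => ?_⟩
  have hfh : ⇑h = Complex.ofRealLI ∘ f := funext hf
  have hsmooth : ContDiff ℝ (⊤ : ℕ∞) f := by
    have hre : f = Complex.reCLM ∘ h := by ext x; simp [hf]
    rw [hre]
    exact Complex.reCLM.contDiff.comp (contDiff_of_mem_bandLimited hh)
  refine ⟨hsmooth, fun M hM n x => ?_⟩
  have hM₀ : 0 ≤ M := (abs_nonneg _).trans (hM x)
  have hnorm : ‖h‖ ≤ M := (norm_le hM₀).2 fun y => by simpa [hf] using hM y
  rw [← Complex.ofRealLI.norm_iteratedFDeriv_comp_left (hsmooth.contDiffAt (x := x))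
    (mod_cast le_top), ← hfh]
  exact (hbernstein Λ hΛ h hh n x).trans (by gcongr)

end Bernstein

/-! ### The covariance of two Lipschitz functions -/

section WeightedCovariance

variable {E : Type*} [MeasurableSpace E] {μ : Measure E} {w u v : E → ℝ}

lemma integral_mul_integral_sub_integral_mul_add_const (hw : ∫ y, w y ∂μ = 1)
    (hu : Integrable (fun y => u y * w y) μ) (hv : Integrable (fun y => v y * w y) μ)
    (huv : Integrable (fun y => u y * v y * w y) μ) (a b : ℝ) :
    (∫ y, (u y + a) * w y ∂μ) * (∫ y, (v y + b) * w y ∂μ)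
        - ∫ y, (u y + a) * (v y + b) * w y ∂μ
      = (∫ y, u y * w y ∂μ) * (∫ y, v y * w y ∂μ) - ∫ y, u y * v y * w y ∂μ := by
  have hwi : Integrable w μ := .of_integral_ne_zero (by simp [hw])
  have shift {p : E → ℝ} (hp : Integrable (fun y => p y * w y) μ) (c : ℝ) :
      ∫ y, (p y + c) * w y ∂μ = (∫ y, p y * w y ∂μ) + c := by
    simp_rw [add_mul]
    rw [integral_add hp (hwi.const_mul c), integral_const_mul, hw, mul_one]
  have expand : ∀ y, (u y + a) * (v y + b) * w y
      = u y * v y * w y + (b * (u y * w y) + a * ((v y + b) * w y)) := fun y => by ring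
  have hvb : Integrable (fun y => (v y + b) * w y) μ := by
    simp_rw [add_mul]
    exact hv.add (hwi.const_mul b)
  have hrest : Integrable (fun y => b * (u y * w y) + a * ((v y + b) * w y)) μ :=
    (hu.const_mul b).add (hvb.const_mul a)
  simp_rw [expand]
  rw [integral_add huv hrest,
    integral_add (hu.const_mul b) (hvb.const_mul a), integral_const_mul, integral_const_mul,
    shift hu, shift hv]
  ring

end WeightedCovariance

section LipschitzCovariance

variable {E : Type*} [SeminormedAddCommGroup E] [MeasurableSpace E]
  {μ : Measure E} {w f g : E → ℝ} {a b A B : ℝ}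

theorem abs_integral_mul_integral_sub_integral_mul_le (hw : ∫ y, w y ∂μ = 1)
    (hw₁ : Integrable (fun y => ‖y‖ * |w y|) μ) (hw₂ : Integrable (fun y => ‖y‖ ^ 2 * |w y|) μ)
    (hfm : AEStronglyMeasurable f μ) (hgm : AEStronglyMeasurable g μ)
    (hf : ∀ y, |f y - a| ≤ A * ‖y‖) (hg : ∀ y, |g y - b| ≤ B * ‖y‖) :
    |(∫ y, f y * w y ∂μ) * (∫ y, g y * w y ∂μ) - ∫ y, f y * g y * w y ∂μ|
      ≤ A * B * ((∫ y, ‖y‖ * |w y| ∂μ) ^ 2 + ∫ y, ‖y‖ ^ 2 * |w y| ∂μ) := by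
  have hwm : AEStronglyMeasurable w μ :=
    (Integrable.of_integral_ne_zero (f := w) (by simp [hw])).aestronglyMeasurable
  have hfw (y : E) : ‖(f y - a) * w y‖ ≤ A * (‖y‖ * |w y|) := by
    rw [Real.norm_eq_abs, abs_mul, ← mul_assoc]
    exact mul_le_mul_of_nonneg_right (hf y) (abs_nonneg _)
  have hgw (y : E) : ‖(g y - b) * w y‖ ≤ B * (‖y‖ * |w y|) := by
    rw [Real.norm_eq_abs, abs_mul, ← mul_assoc]
    exact mul_le_mul_of_nonneg_right (hg y) (abs_nonneg _)
  have hfgw (y : E) : ‖(f y - a) * (g y - b) * w y‖ ≤ A * B * (‖y‖ ^ 2 * |w y|) := by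
    rw [Real.norm_eq_abs, abs_mul, abs_mul]
    calc |f y - a| * |g y - b| * |w y|
      _ ≤ A * ‖y‖ * (B * ‖y‖) * |w y| := by
        gcongr
        exacts [(abs_nonneg _).trans (hf y), hf y, hg y]
      _ = A * B * (‖y‖ ^ 2 * |w y|) := by ring
  have hfm' := hfm.sub (aestronglyMeasurable_const (b := a))
  have hgm' := hgm.sub (aestronglyMeasurable_const (b := b))
  have covariance := integral_mul_integral_sub_integral_mul_add_const hw
    ((hw₁.const_mul A).mono' (hfm'.mul hwm) (.of_forall hfw))
    ((hw₁.const_mul B).mono' (hgm'.mul hwm) (.of_forall hgw))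
    ((hw₂.const_mul (A * B)).mono' ((hfm'.mul hgm').mul hwm) (.of_forall hfgw)) a b
  simp only [Pi.sub_apply, sub_add_cancel] at covariance
  rw [covariance]
  have hf_int := norm_integral_le_of_norm_le (hw₁.const_mul A) (.of_forall hfw)
  have hg_int := norm_integral_le_of_norm_le (hw₁.const_mul B) (.of_forall hgw)
  have hfg_int := norm_integral_le_of_norm_le (hw₂.const_mul (A * B)) (.of_forall hfgw)
  rw [integral_const_mul] at hf_int hg_int hfg_int
  refine (norm_sub_le _ _).trans
    ((add_le_add (norm_mul_le_of_le hf_int hg_int) hfg_int).trans_eq ?_)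
  ring

end LipschitzCovariance

/-! ### Periodic functions and their Fourier coefficients -/

section Torus

attribute [local instance] instMeasureSpaceUnitAddCircle
  instIsAddHaarMeasureUnitAddCircleVolume

variable {ι : Type*}

/-- The vector of frequencies of the `2π`-periodic plane wave indexed by an integer vector. -/
def latticeFreq (m : ι → ℤ) : EuclideanSpace ℝ ι :=
  WithLp.toLp 2 fun i => (m i : ℝ)

@[simp]
lemma latticeFreq_apply (m : ι → ℤ) (i : ι) : latticeFreq m i = m i :=
  rfl

variable (ι) in
/-- The covering of the torus `(ℝ/ℤ)^ι` by Euclidean space, normalised so that pulling a function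
back along it produces a `2π`-periodic function. -/
def torusProj : C(EuclideanSpace ℝ ι, UnitAddTorus ι) where
  toFun x i := (((2 * π)⁻¹ * x i : ℝ) : UnitAddCircle)
  continuous_toFun := by
    refine continuous_pi fun i => (AddCircle.continuous_mk' 1).comp ?_
    fun_prop

lemma torusProj_apply (x : EuclideanSpace ℝ ι) (i : ι) :
    torusProj ι x i = (((2 * π)⁻¹ * x i : ℝ) : UnitAddCircle) :=
  rfl

lemma isQuotientMap_torusProj : Topology.IsQuotientMap (torusProj ι) := by
  have hmk : IsOpenQuotientMap
      (Pi.map fun (_ : ι) (t : ℝ) => (t : UnitAddCircle)) :=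
    .piMap fun _ => QuotientAddGroup.isOpenQuotientMap_mk
  have h2π : (2 * π)⁻¹ ≠ 0 := by positivity
  exact (hmk.comp ((EuclideanSpace.equiv ι ℝ).toHomeomorph.trans
    (Homeomorph.smulOfNeZero _ h2π)).isOpenQuotientMap).isQuotientMap

lemma exists_eq_add_latticeFreq_of_torusProj_eq {x y : EuclideanSpace ℝ ι}
    (hxy : torusProj ι x = torusProj ι y) : ∃ m : ι → ℤ, y = x + (2 * π) • latticeFreq m := by
  have hcoord (i : ι) : ∃ n : ℤ, y i = x i + 2 * π * n := by
    obtain ⟨n, hn⟩ := AddSubgroup.mem_zmultiples_iff.1 (QuotientAddGroup.eq.1 (congrFun hxy i))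
    refine ⟨n, ?_⟩
    simp only [zsmul_eq_mul, mul_one] at hn
    rw [hn]
    field_simp
    ring
  choose m hm using hcoord
  exact ⟨m, by ext i; simpa using hm i⟩

/-- Pull-back along `torusProj`, identifying the functions on the torus with the `2π`-periodic
functions on Euclidean space. -/
def torusPullback : C(UnitAddTorus ι, ℂ) →L[ℂ] (EuclideanSpace ℝ ι →ᵇ ℂ) :=
  compContinuousCLM ℂ ℂ (torusProj ι) ∘L
    (ContinuousMap.linearIsometryBoundedOfCompact
      (UnitAddTorus ι) ℂ ℂ).toLinearIsometry.toContinuousLinearMap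

lemma torusPullback_apply (G : C(UnitAddTorus ι, ℂ)) (x : EuclideanSpace ℝ ι) :
    torusPullback G x = G (torusProj ι x) :=
  rfl

lemma exists_torusPullback_eq {F : EuclideanSpace ℝ ι → ℂ} (hF : Continuous F)
    (hper : ∀ x m, F (x + (2 * π) • latticeFreq m) = F x) :
    ∃ G : C(UnitAddTorus ι, ℂ), ⇑(torusPullback G) = F := by
  have hfactor : Function.FactorsThrough F (torusProj ι) := fun x y hxy => by
    obtain ⟨m, rfl⟩ := exists_eq_add_latticeFreq_of_torusProj_eq hxy
    exact (hper x m).symm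
  refine ⟨isQuotientMap_torusProj.lift ⟨F, hF⟩ hfactor, funext fun x => ?_⟩
  exact DFunLike.congr_fun (isQuotientMap_torusProj.lift_comp ⟨F, hF⟩ hfactor) x

lemma smul_Icc_const {c : ℝ} (hc : 0 < c) (a b : ℝ) :
    c • Set.Icc (fun _ : ι => a) (fun _ => b) = Set.Icc (fun _ => c * a) fun _ => c * b := by
  rw [← Set.pi_univ_Icc, ← Set.pi_univ_Icc, smul_univ_pi]
  exact congrArg _ (funext fun _ => LinearOrderedField.smul_Icc hc)

variable [Fintype ι]

lemma finite_setOf_norm_latticeFreq_le (R : ℝ) : {m : ι → ℤ | ‖latticeFreq m‖ ≤ R}.Finite := by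
  refine (isCompact_closedBall (0 : ι → ℤ) R).finite_of_discrete.subset fun m hm => ?_
  have hR : 0 ≤ R := (norm_nonneg _).trans hm
  rw [mem_closedBall_zero_iff, pi_norm_le_iff_of_nonneg hR]
  exact fun i => (PiLp.norm_apply_le (latticeFreq m) i).trans hm

lemma mFourier_torusProj (m : ι → ℤ) (x : EuclideanSpace ℝ ι) :
    UnitAddTorus.mFourier m (torusProj ι x) = innerProbChar (latticeFreq m) x := by
  simp only [UnitAddTorus.mFourier, ContinuousMap.coe_mk, torusProj_apply, fourier_coe_apply,
    innerProbChar_apply, ← Complex.exp_sum, PiLp.inner_apply, latticeFreq_apply]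
  congr 1
  push_cast
  rw [Finset.sum_mul]
  refine Finset.sum_congr rfl fun i _ => ?_
  simp only [mul_inv_rev, div_one, RCLike.inner_apply, ringHom_apply, Complex.ofReal_mul,
    Complex.ofReal_intCast]
  field_simp

lemma exists_clm_eq_mFourierCoeff (n : ι → ℤ) :
    ∃ c : C(UnitAddTorus ι, ℂ) →L[ℂ] ℂ, ∀ G, c G = UnitAddTorus.mFourierCoeff G n := by
  refine ⟨innerSL ℂ (UnitAddTorus.mFourierLp 2 n) ∘L ContinuousMap.toLp 2 volume ℂ, fun G => ?_⟩
  rw [← UnitAddTorus.mFourierCoeff_toLp, ← UnitAddTorus.mFourierBasis_repr,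
    HilbertBasis.repr_apply_apply, UnitAddTorus.coe_mFourierBasis]
  rfl

lemma mFourierCoeff_mFourier (m n : ι → ℤ) :
    UnitAddTorus.mFourierCoeff (UnitAddTorus.mFourier m) n = if n = m then 1 else 0 := by
  classical
  rw [← UnitAddTorus.mFourierCoeff_toLp, ← UnitAddTorus.mFourierBasis_repr,
    HilbertBasis.repr_apply_apply, UnitAddTorus.coe_mFourierBasis]
  exact orthonormal_iff_ite.1 UnitAddTorus.orthonormal_mFourier n m

theorem rescaledConvAt_torusPullback (ψ : 𝓢(EuclideanSpace ℝ ι, ℂ)) (Λ : ℝ)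
    {s : Finset (ι → ℤ)} (hs : ∀ m ∉ s, 𝓕 ψ (Λ⁻¹ • latticeFreq m) = 0)
    (G : C(UnitAddTorus ι, ℂ)) (x : EuclideanSpace ℝ ι) :
    rescaledConvAt ψ Λ x (torusPullback G) = ∑ m ∈ s,
      𝓕 ψ (Λ⁻¹ • latticeFreq m) * UnitAddTorus.mFourierCoeff G m *
        innerProbChar (latticeFreq m) x := by
  choose c hc using exists_clm_eq_mFourierCoeff (ι := ι)
  suffices h : rescaledConvAt ψ Λ x ∘L torusPullback = ∑ m ∈ s,
      (𝓕 ψ (Λ⁻¹ • latticeFreq m) * innerProbChar (latticeFreq m) x) • c m by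
    have hG := DFunLike.congr_fun h G
    simp only [ContinuousLinearMap.comp_apply, _root_.sum_apply,
      _root_.smul_apply, smul_eq_mul, hc] at hG
    rw [hG]
    exact Finset.sum_congr rfl fun m _ => by ring
  refine ContinuousLinearMap.ext_on
    (Submodule.dense_iff_topologicalClosure_eq_top.2 UnitAddTorus.span_mFourier_closure_eq_top) ?_
  rintro _ ⟨m, rfl⟩
  have hm : torusPullback (UnitAddTorus.mFourier m) = innerProbChar (latticeFreq m) := by
    ext y
    exact mFourier_torusProj m y
  simp only [ContinuousLinearMap.comp_apply, hm, rescaledConvAt_innerProbChar,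
    _root_.sum_apply, _root_.smul_apply, smul_eq_mul, hc, mFourierCoeff_mFourier]
  rw [Finset.sum_eq_single m (fun k _ hk => by simp [hk]) fun hms => by simp [hs m hms]]
  simp

lemma mFourierCoeff_eq_setIntegral_Icc (G : C(UnitAddTorus ι, ℂ)) (k : ι → ℤ) :
    UnitAddTorus.mFourierCoeff G k = ((2 * π) ^ Fintype.card ι)⁻¹ •
      ∫ x in Set.Icc (fun _ : ι => -π) (fun _ => π),
        torusPullback G (WithLp.toLp 2 x) * innerProbChar (-latticeFreq k) (WithLp.toLp 2 x) := by
  have hunit : {x : ι → ℝ | ∀ i, x i ∈ Set.Ioc (-(1 / 2) : ℝ) (-(1 / 2) + 1)}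
      =ᵐ[volume] Set.Icc (fun _ : ι => (-(1 / 2) : ℝ)) fun _ => 1 / 2 := by
    have hbox : {x : ι → ℝ | ∀ i, x i ∈ Set.Ioc (-(1 / 2) : ℝ) (-(1 / 2) + 1)}
        = Set.univ.pi fun _ => Set.Ioc (-(1 / 2)) (1 / 2) := by
      ext x
      norm_num [Set.mem_pi]
    exact hbox ▸ Measure.univ_pi_Ioc_ae_eq_Icc
  have hscale : Set.Icc (fun _ : ι => -π) (fun _ => π)
      = (2 * π) • Set.Icc (fun _ : ι => (-(1 / 2) : ℝ)) fun _ => 1 / 2 := by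
    rw [smul_Icc_const (by positivity)]
    ring_nf
  have hfreq : -latticeFreq k = latticeFreq (-k) := by
    ext i
    simp
  rw [UnitAddTorus.mFourierCoeff_eq_integral _ k fun _ => -(1 / 2), setIntegral_congr_set hunit,
    hscale, ← Module.finrank_fintype_fun_eq_card ℝ,
    ← Measure.setIntegral_comp_smul_of_pos _ _ _ (by positivity)]
  refine integral_congr_ae (.of_forall fun x => ?_)
  have hx : (fun i => (x i : UnitAddCircle)) = torusProj ι (WithLp.toLp 2 ((2 * π) • x)) := by
    ext i
    have h2π : (2 * π)⁻¹ * (2 * π * x i) = x i := inv_mul_cancel_left₀ (by positivity) _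
    rw [torusProj_apply, WithLp.ofLp_toLp, Pi.smul_apply, smul_eq_mul, h2π]
  simp only [smul_eq_mul]
  rw [torusPullback_apply, hfreq, ← mFourier_torusProj, hx, mul_comm]

end Torus

/-! ### Mollification -/

section Mollify

variable {V : Type*} [NormedAddCommGroup V] [InnerProductSpace ℝ V] [FiniteDimensional ℝ V]
  [MeasurableSpace V] [BorelSpace V]

/-- The convolution of `f` with the weight `w` contracted to length scale `2π / Λ`. -/
def mollify (w : V → ℝ) (Λ : ℝ) (f : V → ℝ) (x : V) : ℝ :=
  ∫ y, f (x - (2 * π / Λ) • y) * w y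

/-- The failure `f_Λ g_Λ - (f g)_Λ` of mollification to be multiplicative. -/
def mollifyCommutator (w : V → ℝ) (Λ : ℝ) (f g : V → ℝ) (x : V) : ℝ :=
  mollify w Λ f x * mollify w Λ g x - mollify w Λ (fun z => f z * g z) x

lemma re_rescaledConvAt {h : V →ᵇ ℂ} {f : V → ℝ} (hf : ∀ x, h x = f x) (ψ : 𝓢(V, ℂ)) (Λ : ℝ)
    (x : V) : (rescaledConvAt ψ Λ x h).re = mollify (fun y => (ψ y).re) Λ f x := by
  rw [rescaledConvAt_apply, mollify]
  refine (integral_re (integrable_rescaled_mul ψ Λ x h)).symm.trans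
    (integral_congr_ae (.of_forall fun y => ?_))
  simp only [hf, RCLike.re_to_complex, Complex.re_ofReal_mul]

lemma integral_re_eq_re_fourier_zero (ψ : 𝓢(V, ℂ)) : ∫ y, (ψ y).re = (𝓕 ψ 0).re := by
  rw [SchwartzMap.fourier_coe, Real.fourier_eq']
  simpa using integral_re ψ.integrable

lemma integrable_pow_mul_abs_re (ψ : 𝓢(V, ℂ)) (k : ℕ) :
    Integrable fun y => ‖y‖ ^ k * |(ψ y).re| := by
  refine (ψ.integrable_pow_mul volume k).mono' ?_ (.of_forall fun y => ?_)
  · exact (by fun_prop : Continuous fun y => ‖y‖ ^ k * |(ψ y).re|).aestronglyMeasurable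
  · rw [norm_of_nonneg (by positivity)]
    gcongr
    exact Complex.abs_re_le_norm _

lemma abs_mollifyCommutator_le {w f g : V → ℝ} {A B : ℝ≥0} {Λ : ℝ}
    (hΛ : 0 < Λ) (hw : ∫ y, w y = 1) (hw₁ : Integrable fun y => ‖y‖ * |w y|)
    (hw₂ : Integrable fun y => ‖y‖ ^ 2 * |w y|) (hf : LipschitzWith A f) (hg : LipschitzWith B g)
    (x : V) :
    |mollifyCommutator w Λ f g x|
      ≤ (2 * π) ^ 2 * ((∫ y, ‖y‖ * |w y|) ^ 2 + ∫ y, ‖y‖ ^ 2 * |w y|) / Λ ^ 2 * A * B := by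
  have increment {p : V → ℝ} {K : ℝ≥0} (hp : LipschitzWith K p) (y : V) :
      |p (x - (2 * π / Λ) • y) - p x| ≤ K * (2 * π / Λ) * ‖y‖ := by
    refine (hp.norm_sub_le _ _).trans_eq ?_
    rw [sub_sub_cancel_left, norm_neg, norm_smul, norm_of_nonneg (by positivity), mul_assoc]
  have measurable {p : V → ℝ} {K : ℝ≥0} (hp : LipschitzWith K p) :
      AEStronglyMeasurable fun y => p (x - (2 * π / Λ) • y) :=
    (hp.continuous.comp (by fun_prop)).aestronglyMeasurable
  refine (abs_integral_mul_integral_sub_integral_mul_le hw hw₁ hw₂ (measurable hf) (measurable hg)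
    (increment hf) (increment hg)).trans_eq ?_
  ring

end Mollify

section PeriodicMollify

variable {ι : Type*} [Fintype ι] {ψ : 𝓢(EuclideanSpace ℝ ι, ℂ)} {R : ℝ}

lemma fourier_smul_latticeFreq_eq_zero (hR : ∀ ξ, R < ‖ξ‖ → 𝓕 ψ ξ = 0) {Λ : ℝ} (hΛ : 0 < Λ)
    {m : ι → ℤ} (hm : m ∉ (finite_setOf_norm_latticeFreq_le (R * Λ)).toFinset) :
    𝓕 ψ (Λ⁻¹ • latticeFreq m) = 0 := by
  refine hR _ ?_
  rw [norm_smul, norm_inv, norm_of_nonneg hΛ.le, lt_inv_mul_iff₀ hΛ, mul_comm]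
  simpa using hm

lemma exists_mem_bandLimited_eq_rescaledConvAt_torusPullback (hR : ∀ ξ, R < ‖ξ‖ → 𝓕 ψ ξ = 0)
    {Λ : ℝ} (hΛ : 0 < Λ) (G : C(UnitAddTorus ι, ℂ)) :
    ∃ h ∈ bandLimited (EuclideanSpace ℝ ι) (R * Λ),
      ∀ x, h x = rescaledConvAt ψ Λ x (torusPullback G) := by
  refine ⟨∑ m ∈ (finite_setOf_norm_latticeFreq_le (R * Λ)).toFinset,
    (𝓕 ψ (Λ⁻¹ • latticeFreq m) * UnitAddTorus.mFourierCoeff G m) • innerProbChar (latticeFreq m),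
    ?_, fun x => ?_⟩
  · exact sum_mem fun m hm =>
      Submodule.smul_mem _ _ (innerProbChar_mem_bandLimited (by simpa using hm))
  · rw [rescaledConvAt_torusPullback ψ Λ fun m => fourier_smul_latticeFreq_eq_zero hR hΛ]
    simp

lemma exists_mem_bandLimited_eq_mollify (hR : ∀ ξ, R < ‖ξ‖ → 𝓕 ψ ξ = 0) {Λ : ℝ} (hΛ : 0 < Λ)
    {f : EuclideanSpace ℝ ι → ℝ} (hf : Continuous f)
    (hper : ∀ x m, f (x + (2 * π) • latticeFreq m) = f x) :
    ∃ h ∈ bandLimited (EuclideanSpace ℝ ι) (R * Λ),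
      ∀ x, h x = (mollify (fun y => (ψ y).re) Λ f x : ℂ) := by
  obtain ⟨G, hG⟩ := exists_torusPullback_eq (Complex.continuous_ofReal.comp hf)
    fun x m => congrArg Complex.ofReal (hper x m)
  obtain ⟨h, hh, hconv⟩ := exists_mem_bandLimited_eq_rescaledConvAt_torusPullback hR hΛ G
  obtain ⟨h', hh', hre⟩ := exists_mem_bandLimited_eq_re hh
  refine ⟨h', hh', fun x => ?_⟩
  rw [hre, hconv, re_rescaledConvAt (congrFun hG)]

lemma exists_mem_bandLimited_eq_mollifyCommutator (hR₀ : 0 ≤ R) (hR : ∀ ξ, R < ‖ξ‖ → 𝓕 ψ ξ = 0)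
    {Λ : ℝ} (hΛ : 0 < Λ) {f g : EuclideanSpace ℝ ι → ℝ} (hf : Continuous f) (hg : Continuous g)
    (hfper : ∀ x m, f (x + (2 * π) • latticeFreq m) = f x)
    (hgper : ∀ x m, g (x + (2 * π) • latticeFreq m) = g x) :
    ∃ h ∈ bandLimited (EuclideanSpace ℝ ι) (2 * R * Λ),
      ∀ x, h x = (mollifyCommutator (fun y => (ψ y).re) Λ f g x : ℂ) := by
  obtain ⟨hf', hf_mem, hf_eq⟩ := exists_mem_bandLimited_eq_mollify hR hΛ hf hfper
  obtain ⟨hg', hg_mem, hg_eq⟩ := exists_mem_bandLimited_eq_mollify hR hΛ hg hgper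
  obtain ⟨hfg', hfg_mem, hfg_eq⟩ := exists_mem_bandLimited_eq_mollify hR hΛ (hf.mul hg)
    fun x m => congrArg₂ (· * ·) (hfper x m) (hgper x m)
  have hRΛ : R * Λ + R * Λ = 2 * R * Λ := by ring
  have hmono : R * Λ ≤ 2 * R * Λ := by linarith [mul_nonneg hR₀ hΛ.le]
  refine ⟨hf' * hg' - hfg', sub_mem (hRΛ ▸ mul_mem_bandLimited hf_mem hg_mem)
    (bandLimited_mono hmono hfg_mem), fun x => ?_⟩
  simp only [coe_sub, coe_mul, Pi.sub_apply, Pi.mul_apply, hf_eq, hg_eq, hfg_eq, mollifyCommutator]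
  push_cast
  rfl

theorem exists_norm_iteratedFDeriv_mollifyCommutator_le (hR₀ : 0 < R)
    (hR : ∀ ξ, R < ‖ξ‖ → 𝓕 ψ ξ = 0) (hψ : 𝓕 ψ 0 = 1) :
    ∃ C K : ℝ, 0 ≤ C ∧ 0 ≤ K ∧ ∀ f g : EuclideanSpace ℝ ι → ℝ,
      (∀ x m, f (x + (2 * π) • latticeFreq m) = f x) →
      (∀ x m, g (x + (2 * π) • latticeFreq m) = g x) →
      ∀ A B : ℝ≥0, LipschitzWith A f → LipschitzWith B g → ∀ Λ : ℝ, 0 < Λ →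
        ContDiff ℝ (⊤ : ℕ∞) (mollifyCommutator (fun y => (ψ y).re) Λ f g) ∧
        ∀ (n : ℕ) (x : EuclideanSpace ℝ ι),
          ‖iteratedFDeriv ℝ n (mollifyCommutator (fun y => (ψ y).re) Λ f g) x‖
            ≤ (K * Λ) ^ n * (C / Λ ^ 2 * A * B) := by
  obtain ⟨K, hK, hbernstein⟩ :=
    exists_norm_iteratedFDeriv_le_of_ofReal_mem_bandLimited (EuclideanSpace ℝ ι)
  have hw : ∫ y, (ψ y).re = 1 := by rw [integral_re_eq_re_fourier_zero, hψ, Complex.one_re]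
  have hw₁ : Integrable fun y => ‖y‖ * |(ψ y).re| := by
    simpa only [pow_one] using integrable_pow_mul_abs_re ψ 1
  refine ⟨(2 * π) ^ 2 * ((∫ y, ‖y‖ * |(ψ y).re|) ^ 2 + ∫ y, ‖y‖ ^ 2 * |(ψ y).re|), K * (2 * R),
    by positivity, by positivity, fun f g hfper hgper A B hf hg Λ hΛ => ?_⟩
  obtain ⟨h, hh, hh_eq⟩ := exists_mem_bandLimited_eq_mollifyCommutator hR₀.le hR hΛ
    hf.continuous hg.continuous hfper hgper
  obtain ⟨hsmooth, hderiv⟩ := hbernstein (2 * R * Λ) (by positivity) h hh _ hh_eq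
  refine ⟨hsmooth, ?_⟩
  rw [mul_assoc K]
  exact hderiv _ (abs_mollifyCommutator_le hΛ hw hw₁ (integrable_pow_mul_abs_re ψ 2) hf hg)

end PeriodicMollify

/-! ### The dyadic cutoff -/

section Cutoff

lemma two_zpow_Jof_le {S : ℝ} (hS : 0 < S) : (2 : ℝ) ^ Jof S ≤ S := by
  rw [← rpow_intCast, ← le_logb_iff_rpow_le one_lt_two hS]
  exact Int.floor_le _

lemma lt_two_mul_two_zpow_Jof {S : ℝ} (hS : 0 < S) : S < 2 * (2 : ℝ) ^ Jof S := by
  rw [mul_comm, ← zpow_add_one₀ two_ne_zero, ← rpow_intCast,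
    ← logb_lt_iff_lt_rpow one_lt_two hS]
  push_cast [Jof]
  exact Int.lt_floor_add_one _

lemma mul_pow_mul_div_sq_le {C K Λ ℓ : ℝ} (hC : 0 ≤ C) (hK : 0 ≤ K) (hℓ : 0 < ℓ) (hΛ : 0 < Λ)
    (hle : Λ ≤ ℓ⁻¹) (hge : ℓ⁻¹ ≤ 2 * Λ) (n : ℕ) :
    (K * Λ) ^ n * (C / Λ ^ 2) ≤ 4 * C * K ^ n * ℓ ^ ((2 : ℝ) - n) := by
  have hΛ_inv : Λ⁻¹ ≤ 2 * ℓ := by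
    rw [inv_le_iff_one_le_mul₀ hΛ]
    rw [inv_le_iff_one_le_mul₀ hℓ] at hge
    linarith
  calc (K * Λ) ^ n * (C / Λ ^ 2)
    _ = K ^ n * Λ ^ n * (C * Λ⁻¹ ^ 2) := by rw [mul_pow, inv_pow, div_eq_mul_inv]
    _ ≤ K ^ n * ℓ⁻¹ ^ n * (C * (2 * ℓ) ^ 2) := by gcongr
    _ = 4 * C * K ^ n * ℓ ^ ((2 : ℝ) - n) := by
      rw [rpow_sub hℓ, rpow_natCast, rpow_two, inv_pow]
      ring

lemma norm_le_enorm3 (x : V3) : ‖x‖ ≤ enorm3 x :=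
  (pi_norm_le_iff_of_nonneg (sqrt_nonneg _)).2 fun i =>
    abs_le_sqrt (Finset.single_le_sum (fun j _ => sq_nonneg (x j)) (Finset.mem_univ i))

lemma IsCutoff.hasCompactSupport {φ : V3 → ℝ} (hφ : IsCutoff φ) : HasCompactSupport φ :=
  .intro (isCompact_closedBall 0 2) fun x hx => by
    rw [mem_closedBall_zero_iff, not_le] at hx
    exact hφ.2.2.2 x (hx.le.trans (norm_le_enorm3 x))

lemma IsCutoff.apply_zero {φ : V3 → ℝ} (hφ : IsCutoff φ) : φ 0 = 1 :=
  hφ.2.2.1 0 (by simp [enorm3])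

variable {ι : Type*} [Fintype ι]

lemma exists_schwartzMap_fourier_eq_ofLp {φ : (ι → ℝ) → ℝ} (hφ : ContDiff ℝ (⊤ : ℕ∞) φ)
    (hsupp : HasCompactSupport φ) :
    ∃ (ψ : 𝓢(EuclideanSpace ℝ ι, ℂ)) (R : ℝ), 0 < R ∧ (∀ ξ, R < ‖ξ‖ → 𝓕 ψ ξ = 0) ∧
      ∀ ξ, 𝓕 ψ ξ = φ (WithLp.ofLp ξ) := by
  have hsupp' : HasCompactSupport (φ ∘ EuclideanSpace.equiv ι ℝ) :=
    hsupp.comp_homeomorph (EuclideanSpace.equiv ι ℝ).toHomeomorph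
  obtain ⟨ψ, hψ⟩ := exists_schwartzMap_fourier_eq
    (hφ.comp (EuclideanSpace.equiv ι ℝ).contDiff) hsupp'
  obtain ⟨R, hR, hball⟩ := hsupp'.isCompact.isBounded.exists_pos_norm_le
  refine ⟨ψ, R, hR, fun ξ hξ => ?_, hψ⟩
  rw [hψ, image_eq_zero_of_notMem_tsupport fun hmem => hξ.not_ge (hball ξ hmem),
    Complex.ofReal_zero]

lemma fcoef_eq_mFourierCoeff {F : V3 → ℝ} {G : C(UnitAddTorus (Fin 3), ℂ)}
    (hG : ∀ x, torusPullback G x = F (WithLp.ofLp x)) (k : Fin 3 → ℤ) :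
    fcoef F k = UnitAddTorus.mFourierCoeff G k := by
  rw [fcoef, mFourierCoeff_eq_setIntegral_Icc, Fintype.card_fin, T3]
  congr 1
  refine integral_congr_ae (.of_forall fun x => ?_)
  simp only [hG, innerProbChar_apply, PiLp.inner_apply]
  congr 2
  simp [mul_comm]

lemma PerSpace.ofLp_add_latticeFreq {α : Type*} {F : V3 → α} (hF : PerSpace F)
    (x : EuclideanSpace ℝ (Fin 3)) (m : Fin 3 → ℤ) :
    F (WithLp.ofLp (x + (2 * π) • latticeFreq m)) = F (WithLp.ofLp x) :=
  hF (WithLp.ofLp x) m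

lemma Pse_eq_mollify {φ F : V3 → ℝ} {ψ : 𝓢(EuclideanSpace ℝ (Fin 3), ℂ)} {R : ℝ}
    (hR : ∀ ξ, R < ‖ξ‖ → 𝓕 ψ ξ = 0) (hψ : ∀ ξ, 𝓕 ψ ξ = φ (WithLp.ofLp ξ)) (hF : Continuous F)
    (hper : PerSpace F) (S : ℝ) (x : V3) :
    Pse φ S F x = mollify (fun y => (ψ y).re) (2 ^ Jof S) (fun y => F (WithLp.ofLp y))
      (WithLp.toLp 2 x) := by
  set Λ : ℝ := 2 ^ Jof S with hΛ_def
  have hΛ : 0 < Λ := by positivity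
  obtain ⟨G, hG⟩ := exists_torusPullback_eq (F := fun y => (F (WithLp.ofLp y) : ℂ))
    (by fun_prop) fun y m => congrArg Complex.ofReal (hper.ofLp_add_latticeFreq y m)
  have hsymbol (k : Fin 3 → ℤ) : (φ fun i => k i / Λ : ℂ) = 𝓕 ψ (Λ⁻¹ • latticeFreq k) := by
    rw [hψ]
    congr 2
    ext i
    simp [div_eq_inv_mul]
  have hwave (k : Fin 3 → ℤ) :
      Complex.exp (Complex.I * ((∑ i, (k i : ℝ) * x i : ℝ) : ℂ))
        = innerProbChar (latticeFreq k) (WithLp.toLp 2 x) := by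
    simp [innerProbChar_apply, PiLp.inner_apply, mul_comm]
  rw [Pse, ← re_rescaledConvAt (congrFun hG), rescaledConvAt_torusPullback ψ Λ
    fun m => fourier_smul_latticeFreq_eq_zero hR hΛ, ← hΛ_def]
  simp only [hsymbol, hwave, fcoef_eq_mFourierCoeff (congrFun hG)]
  rw [tsum_eq_sum fun k hk => ?_]
  rw [fourier_smul_latticeFreq_eq_zero hR hΛ hk, zero_mul, zero_mul]

lemma Pse_mul_sub_eq_mollifyCommutator {φ F G : V3 → ℝ} {ψ : 𝓢(EuclideanSpace ℝ (Fin 3), ℂ)}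
    {R : ℝ} (hR : ∀ ξ, R < ‖ξ‖ → 𝓕 ψ ξ = 0) (hψ : ∀ ξ, 𝓕 ψ ξ = φ (WithLp.ofLp ξ))
    (hF : Continuous F) (hG : Continuous G) (hFper : PerSpace F) (hGper : PerSpace G) (S : ℝ) :
    (fun x => Pse φ S F x * Pse φ S G x - Pse φ S (fun z => F z * G z) x)
      = mollifyCommutator (fun y => (ψ y).re) (2 ^ Jof S) (fun y => F (WithLp.ofLp y))
        (fun y => G (WithLp.ofLp y)) ∘ (EuclideanSpace.equiv (Fin 3) ℝ).symm := by
  have hFGper : PerSpace fun z => F z * G z := fun x v => congrArg₂ (· * ·) (hFper x v) (hGper x v)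
  ext x
  rw [Pse_eq_mollify hR hψ hF hFper, Pse_eq_mollify hR hψ hG hGper,
    Pse_eq_mollify (F := fun z => F z * G z) hR hψ (hF.mul hG) hFGper]
  rfl

theorem statement13_general {φ : V3 → ℝ} (hφ : ContDiff ℝ (⊤ : ℕ∞) φ) (hsupp : HasCompactSupport φ)
    (hφ₀ : φ 0 = 1) :
    ∃ C K : ℝ, 0 < C ∧ 1 ≤ K ∧ ∀ F G : V3 → ℝ, PerSpace F → PerSpace G →
      ∀ A B : ℝ≥0, LipschitzWith A F → LipschitzWith B G → ∀ ℓ : ℝ, 0 < ℓ → ∀ (n : ℕ) (x : V3),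
        ‖iteratedFDeriv ℝ n (fun y => Pse φ ℓ⁻¹ F y * Pse φ ℓ⁻¹ G y
          - Pse φ ℓ⁻¹ (fun z => F z * G z) y) x‖ ≤ C * K ^ n * ℓ ^ ((2 : ℝ) - n) * A * B := by
  obtain ⟨ψ, R, hR₀, hR, hψ⟩ := exists_schwartzMap_fourier_eq_ofLp hφ hsupp
  obtain ⟨C, K, hC, hK, hcommutator⟩ := exists_norm_iteratedFDeriv_mollifyCommutator_le hR₀ hR
    (by simp [hψ, hφ₀])
  let L : V3 →L[ℝ] EuclideanSpace ℝ (Fin 3) := (EuclideanSpace.equiv (Fin 3) ℝ).symm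
  refine ⟨4 * (C + 1), max 1 (‖L‖ * K), by positivity, le_max_left _ _,
    fun F G hFper hGper A B hF hG ℓ hℓ n x => ?_⟩
  set Λ : ℝ := 2 ^ Jof ℓ⁻¹
  have hΛ : 0 < Λ := by positivity
  have hlipschitz {p : V3 → ℝ} {D : ℝ≥0} (hp : LipschitzWith D p) :
      LipschitzWith D fun y : EuclideanSpace ℝ (Fin 3) => p (WithLp.ofLp y) :=
    mul_one D ▸ hp.comp (PiLp.lipschitzWith_ofLp 2 fun _ => ℝ)
  obtain ⟨hsmooth, hderiv⟩ := hcommutator _ _ hFper.ofLp_add_latticeFreq hGper.ofLp_add_latticeFreq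
    A B (hlipschitz hF) (hlipschitz hG) Λ hΛ
  rw [Pse_mul_sub_eq_mollifyCommutator hR hψ hF.continuous hG.continuous hFper hGper]
  calc _
    _ ≤ ‖L‖ ^ n * ((K * Λ) ^ n * (C / Λ ^ 2 * A * B)) :=
      (norm_iteratedFDeriv_comp_right_le L (hsmooth.of_le (mod_cast le_top)) x).trans
        (by gcongr; exact hderiv n _)
    _ = (‖L‖ * K * Λ) ^ n * (C / Λ ^ 2) * A * B := by ring
    _ ≤ (max 1 (‖L‖ * K) * Λ) ^ n * ((C + 1) / Λ ^ 2) * A * B := by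
      gcongr
      exacts [le_max_right _ _, le_add_of_nonneg_right zero_le_one]
    _ ≤ 4 * (C + 1) * max 1 (‖L‖ * K) ^ n * ℓ ^ ((2 : ℝ) - n) * A * B := by
      have hscale := mul_pow_mul_div_sq_le (by positivity : 0 ≤ C + 1)
        (by positivity : 0 ≤ max 1 (‖L‖ * K)) hℓ hΛ (two_zpow_Jof_le (inv_pos.2 hℓ))
        (lt_two_mul_two_zpow_Jof (inv_pos.2 hℓ)).le n
      gcongr ?_ * A * B

end Cutoff

/-- **Mollification commutator estimate (quadratic version).**  With `f_ℓ = P_{≤ℓ⁻¹}f`,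
`g_ℓ = P_{≤ℓ⁻¹}g`, `(fg)_ℓ = P_{≤ℓ⁻¹}(fg)`, one has
`‖f_ℓ g_ℓ - (fg)_ℓ‖_N ≤ C(N) ℓ^{2-N} ‖f‖₁ ‖g‖₁` for every `N ≥ 0`. -/
theorem statement13 (φ : V3 → ℝ) (hφ : IsCutoff φ) (N : ℕ) :
    ∃ C : ℝ, 0 < C ∧
      ∀ T : ℝ, 0 < T →
      ∀ f g : ℝ × V3 → ℝ, ContDiff ℝ (⊤ : ℕ∞) f → PerSpaceT f → ContDiff ℝ (⊤ : ℕ∞) g → PerSpaceT g →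
      ∀ ℓ : ℝ, 0 < ℓ → ℓ < 1 →
      ∀ Cf Cg : ℝ,
        (∀ t ∈ Set.Icc (0 : ℝ) T, ∀ x : V3, ∀ n : ℕ, n ≤ 1 →
          ‖iteratedFDeriv ℝ n (fun y => f (t, y)) x‖ ≤ Cf) →
        (∀ t ∈ Set.Icc (0 : ℝ) T, ∀ x : V3, ∀ n : ℕ, n ≤ 1 →
          ‖iteratedFDeriv ℝ n (fun y => g (t, y)) x‖ ≤ Cg) →
        ∀ t ∈ Set.Icc (0 : ℝ) T, ∀ x : V3, ∀ n : ℕ, n ≤ N →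
          ‖iteratedFDeriv ℝ n
              (fun y => Pse φ ℓ⁻¹ (fun z => f (t, z)) y * Pse φ ℓ⁻¹ (fun z => g (t, z)) y
                - Pse φ ℓ⁻¹ (fun z => f (t, z) * g (t, z)) y) x‖
            ≤ C * ℓ ^ ((2 : ℝ) - N) * Cf * Cg := by
  obtain ⟨C, K, hC, hK, hbound⟩ :=
    statement13_general hφ.1 hφ.hasCompactSupport hφ.apply_zero
  refine ⟨C * K ^ N, by positivity,
    fun T _ f g hf hfper hg hgper ℓ hℓ hℓ₁ Cf Cg hCf hCg t ht x n hn => ?_⟩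
  lift Cf to ℝ≥0 using (norm_nonneg _).trans (hCf t ht x 0 zero_le_one)
  lift Cg to ℝ≥0 using (norm_nonneg _).trans (hCg t ht x 0 zero_le_one)
  have hf_lip : LipschitzWith Cf fun y => f (t, y) :=
    lipschitzWith_slice_of_norm_iteratedFDeriv_one_le (hf.differentiable (by simp))
      fun y => hCf t ht y 1 le_rfl
  have hg_lip : LipschitzWith Cg fun y => g (t, y) :=
    lipschitzWith_slice_of_norm_iteratedFDeriv_one_le (hg.differentiable (by simp))
      fun y => hCg t ht y 1 le_rfl
  calc _
    _ ≤ C * K ^ n * ℓ ^ ((2 : ℝ) - n) * Cf * Cg :=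
      hbound (fun y => f (t, y)) (fun y => g (t, y)) (hfper t) (hgper t) Cf Cg hf_lip hg_lip
        ℓ hℓ n x
    _ ≤ C * K ^ N * ℓ ^ ((2 : ℝ) - N) * Cf * Cg := by
      have hℓ_pow : ℓ ^ ((2 : ℝ) - n) ≤ ℓ ^ ((2 : ℝ) - N) :=
        rpow_le_rpow_of_exponent_ge hℓ hℓ₁.le (by gcongr)
      gcongr
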